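/- (Dougall/Jackson summation for E^{m,2}.) Let a, x ∈ ℂ^m and s, c_1, c_2, d_1, d_2 ∈ ℂ satisfy the balancing condition a_1 + ⋯ + a_m + c_1 + c_2 + d_1 + d_2 = δ + 2s and the termination condition d_2 = −Nδ for some N ∈ ℕ. Then, for generic parameters (all brackets appearing in denominators nonzero): E^{m,2}( a; x | s; (c_1, c_2); (d_1, d_2) ) = ∏_{k=1}^{2} [δ+s−c_k−d_1]_N/[δ+s−c_k]_N · ∏_{i=1}^m ( [δ+s+x_i]_N [δ+s+x_i−a_i−d_1]_N / ([δ+s+x_i−a_i]_N [δ+s+x_i−d_1]_N) ). -/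

import Mathlib

/-!
The Dougall/Jackson sum for `E^{m,2}` is a summation over a simplex in disguise.

*Partial fractions.* If `X_1, …, X_n` and `b_1, …, b_n` have equal sums, then
`Σ_i ∏_j [X_i - b_j] / ∏_{j ≠ i} [X_i - X_j] = 0` (`partial_fraction`). For `n ≥ 3` the Riemann
relation writes `[X - b_p][X - b_q]` as a combination of `[X - X_p][X - b']` and
`[X - X_q][X - b'']`, and each of these cancels a pole, which gives an induction on `n`. The
relation can be divided by its coefficient only if `[X_p + X_q - b_p - b_q] ≠ 0`; the general case
follows by perturbing the `b_j`, as the zeros of a nonzero entire function are isolated.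

*Simplex summation.* For `n` points `z_i`, `n + 1` parameters `a_j` and `b = Σ a_j + Σ z_i`, let
`W(k) = Δ(z + kδ)/Δ(z) · ∏_i (∏_j [z_i + a_j]_{k_i}) / ([z_i + b]_{k_i} ∏_j [z_i - z_j + δ]_{k_i})`.
Then `Σ_{|k| = N} W(k) = ∏_j [b - a_j]_N / ([δ]_N ∏_i [b + z_i]_N)` (`sum_simplexTerm`). In the
induction on `N`, one partial fraction expansion writes a constant multiple of `W(k)`, `|k| = N + 1`,
as a sum over the ways of lowering one `k_i`; after exchanging the sums, a second one collapses
the contributions at each `k` with `|k| = N` (`simplex_summation`).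

*Specialization.* Take the `m + 1` points `(-s - Nδ, x)`, the parameters `c_2, c_1, a_j - x_j` and
`b = δ + s - d_1`; the balancing condition of the simplex sum is then the given one. Reversing the
factorials at the first point yields `W(N - |μ|, μ) = W(N, 0) · (μ-th term of E^{m,2})`
(`simplexTerm_eq_Eterm`), hence the formula when some additional brackets do not vanish
(`generic_summation`).

*Removing the additional conditions.* Replace `s` by `s + t` and `d_1` by `d_1 + 2t`. The balancing
condition persists, the additional brackets are nonzero for small `t ≠ 0`, and both sides are
continuous at `t = 0`.
-/

open Finset

/-- Shifted factorial `[x]_k = [x][x+δ]⋯[x+(k-1)δ]` with respect to the bracket `f`. -/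
noncomputable def sf (f : ℂ → ℂ) (δ : ℂ) (x : ℂ) (k : ℕ) : ℂ :=
  ∏ i ∈ Finset.range k, f (x + (i : ℂ) * δ)

/-- Difference product `Δ(x) = ∏_{i<j} [x_i - x_j]`. -/
noncomputable def Del (f : ℂ → ℂ) {m : ℕ} (x : Fin m → ℂ) : ℂ :=
  ∏ i : Fin m, ∏ j ∈ Finset.univ.filter (fun j => i < j), f (x i - x j)

/-- The multiple hypergeometric series `Φ^{m,n}_N(a; x | b; c)`. -/
noncomputable def Phi (f : ℂ → ℂ) (δ : ℂ) {m n : ℕ} (a x : Fin m → ℂ)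
    (b c : Fin n → ℂ) (N : ℕ) : ℂ :=
  ∑ μ ∈ Finset.Nat.antidiagonalTuple m N,
    (Del f (fun i => x i + (μ i : ℂ) * δ) / Del f x)
      * (∏ i, ∏ j, sf f δ (x i - x j + a j) (μ i) / sf f δ (x i - x j + δ) (μ i))
      * (∏ i, ∏ k, sf f δ (x i + b k) (μ i) / sf f δ (x i + c k) (μ i))

/-- The `μ`-th summand of the very well-poised series `E^{m,n}(a; x | s; u; v)`. -/
noncomputable def Eterm (f : ℂ → ℂ) (δ : ℂ) {m n : ℕ} (a x : Fin m → ℂ) (s : ℂ)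
    (u v : Fin n → ℂ) (μ : Fin m → ℕ) : ℂ :=
  (Del f (fun i => x i + (μ i : ℂ) * δ) / Del f x)
    * (∏ i, f (x i + s + (((∑ j, μ j) + μ i : ℕ) : ℂ) * δ) / f (x i + s))
    * (∏ j, (sf f δ (s + x j) (∑ i, μ i) / sf f δ (δ + s + x j - a j) (∑ i, μ i))
        * ∏ i, sf f δ (x i - x j + a j) (μ i) / sf f δ (x i - x j + δ) (μ i))
    * (∏ k, (sf f δ (v k) (∑ i, μ i) / sf f δ (δ + s - u k) (∑ i, μ i))
        * ∏ i, sf f δ (x i + u k) (μ i) / sf f δ (x i + δ + s - v k) (μ i))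

/-- The very well-poised multiple series `E^{m,n}(a; x | s; u; v)`. -/
noncomputable def Evw (f : ℂ → ℂ) (δ : ℂ) {m n : ℕ} (a x : Fin m → ℂ) (s : ℂ)
    (u v : Fin n → ℂ) : ℂ :=
  ∑' μ : Fin m → ℕ, Eterm f δ a x s u v μ

/-- The one-dimensional very well-poised series `_{r+3}E_{r+2}(s; u_1, …, u_r)`. -/
noncomputable def E1 (f : ℂ → ℂ) (δ : ℂ) {r : ℕ} (s : ℂ) (u : Fin r → ℂ) : ℂ :=
  ∑' k : ℕ, (f (s + 2 * (k : ℂ) * δ) / f s) * (sf f δ s k / sf f δ δ k)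
    * ∏ i, sf f δ (u i) k / sf f δ (δ + s - u i) k

/-! ### The partial fraction identity -/

/-- The zeros of a bracket are isolated, so any finite list of nonvanishing conditions holds after
an arbitrarily small shift of the parameters. -/
lemma eventually_bracket_ne_zero {f : ℂ → ℂ} (hf : f ≠ 0) (hdiff : Differentiable ℂ f)
    (c r : ℂ) (hr : r ≠ 0) : ∀ᶠ t in nhdsWithin (0 : ℂ) {0}ᶜ, f (c + r * t) ≠ 0 := by
  have hg : Differentiable ℂ (fun t => f (c + r * t)) := by fun_prop
  have han : AnalyticOnNhd ℂ (fun t => f (c + r * t)) Set.univ :=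
    fun z _ => hg.analyticAt z
  rcases (hg.analyticAt 0).eventually_eq_zero_or_eventually_ne_zero with h | h
  · exfalso
    apply hf
    have h0 : (fun t => f (c + r * t)) = fun _ => (0 : ℂ) :=
      han.eq_of_eventuallyEq (fun z _ => analyticAt_const) (z₀ := 0) h
    funext y
    have := congrFun h0 ((y - c) / r)
    beta_reduce at this
    rw [mul_div_cancel₀ _ hr] at this
    simpa using this
  · exact h

/-- The three-term form of the Riemann relation: `[X - p][X - q]` is a combination of the two
functions `[X - P][X - (p + q - P)]` and `[X - Q][X - (p + q - Q)]`, all three having the same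
sum of zeros. -/
lemma three_term {f : ℂ → ℂ} (hodd : ∀ t : ℂ, f (-t) = -f t)
    (hRiem : ∀ x y u v : ℂ,
      f (x + y) * f (x - y) * f (u + v) * f (u - v) =
        f (x + u) * f (x - u) * f (y + v) * f (y - v)
          - f (x + v) * f (x - v) * f (y + u) * f (y - u))
    (X p q P Q : ℂ) :
    f (X - p) * f (X - q) * (f (P - Q) * f (P + Q - (p + q))) =
      f (P - p) * f (P - q) * (f (X - Q) * f (X - (p + q - Q)))
        - f (Q - p) * f (Q - q) * (f (X - P) * f (X - (p + q - P))) := by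
  have h := hRiem (X - (p + q) / 2) ((p - q) / 2) (P - (p + q) / 2) (Q - (p + q) / 2)
  have e1 : f (X - (p + q) / 2 + (p - q) / 2) = f (X - q) := by congr 1; ring
  have e2 : f (X - (p + q) / 2 - (p - q) / 2) = f (X - p) := by congr 1; ring
  have e3 : f (P - (p + q) / 2 + (Q - (p + q) / 2)) = f (P + Q - (p + q)) := by congr 1; ring
  have e4 : f (P - (p + q) / 2 - (Q - (p + q) / 2)) = f (P - Q) := by congr 1; ring
  have e5 : f (X - (p + q) / 2 + (P - (p + q) / 2)) = f (X - (p + q - P)) := by congr 1; ring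
  have e6 : f (X - (p + q) / 2 - (P - (p + q) / 2)) = f (X - P) := by congr 1; ring
  have e7 : f ((p - q) / 2 + (Q - (p + q) / 2)) = f (Q - q) := by congr 1; ring
  have e8 : f ((p - q) / 2 - (Q - (p + q) / 2)) = -f (Q - p) := by
    rw [← hodd]; congr 1; ring
  have e9 : f (X - (p + q) / 2 + (Q - (p + q) / 2)) = f (X - (p + q - Q)) := by congr 1; ring
  have e10 : f (X - (p + q) / 2 - (Q - (p + q) / 2)) = f (X - Q) := by congr 1; ring
  have e11 : f ((p - q) / 2 + (P - (p + q) / 2)) = f (P - q) := by congr 1; ring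
  have e12 : f ((p - q) / 2 - (P - (p + q) / 2)) = -f (P - p) := by
    rw [← hodd]; congr 1; ring
  rw [e1, e2, e3, e4, e5, e6, e7, e8, e9, e10, e11, e12] at h
  linear_combination h

/-- Contribution of the term containing `[X i - X p]`: this factor removes the point `X p` from
the partial fraction sum, while `b q` is replaced by `e`. -/
lemma partial_fraction_drop {ι : Type*} [DecidableEq ι] (f : ℂ → ℂ) (h0 : f 0 = 0)
    (S : Finset ι) (X b : ι → ℂ) (p q : ι) (e : ℂ) (hp : p ∈ S) (hq : q ∈ S) (hpq : p ≠ q)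
    (hX : ∀ i ∈ S, ∀ j ∈ S, i ≠ j → f (X i - X j) ≠ 0) :
    ∑ i ∈ S, (f (X i - X p) * f (X i - e)) * (∏ j ∈ (S.erase p).erase q, f (X i - b j))
        / ∏ j ∈ S.erase i, f (X i - X j)
      = ∑ i ∈ S.erase p, (∏ j ∈ S.erase p, f (X i - Function.update b q e j))
        / ∏ j ∈ (S.erase p).erase i, f (X i - X j) := by
  rw [← Finset.add_sum_erase S _ hp]
  simp only [sub_self, h0, zero_mul, zero_div, zero_add]
  refine Finset.sum_congr rfl fun i hi => ?_
  obtain ⟨hip, hiS⟩ := Finset.mem_erase.1 hi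
  have hq' : q ∈ S.erase p := Finset.mem_erase.2 ⟨hpq.symm, hq⟩
  have hp' : p ∈ S.erase i := Finset.mem_erase.2 ⟨hip.symm, hp⟩
  rw [← Finset.mul_prod_erase (S.erase p) _ hq', ← Finset.mul_prod_erase (S.erase i) _ hp',
    Function.update_self, Finset.erase_right_comm (a := i) (b := p)]
  have : ∏ j ∈ (S.erase p).erase q, f (X i - Function.update b q e j)
      = ∏ j ∈ (S.erase p).erase q, f (X i - b j) :=
    Finset.prod_congr rfl fun j hj => by
      rw [Function.update_of_ne (Finset.ne_of_mem_erase hj)]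
  rw [this, mul_assoc, mul_div_mul_left _ _ (hX i hiS p hp hip)]

/-- Partial fraction identity for brackets: with as many zeros `b j` as poles `X i` and equal
sums, the sum of all residues vanishes. -/
lemma partial_fraction {ι : Type*} [DecidableEq ι] {f : ℂ → ℂ} (hf : f ≠ 0)
    (hodd : ∀ t : ℂ, f (-t) = -f t) (hdiff : Differentiable ℂ f)
    (hRiem : ∀ x y u v : ℂ,
      f (x + y) * f (x - y) * f (u + v) * f (u - v) =
        f (x + u) * f (x - u) * f (y + v) * f (y - v)
          - f (x + v) * f (x - v) * f (y + u) * f (y - u))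
    (n : ℕ) : ∀ (S : Finset ι), S.card = n → ∀ (X b : ι → ℂ),
      (∀ i ∈ S, ∀ j ∈ S, i ≠ j → f (X i - X j) ≠ 0) → ∑ i ∈ S, X i = ∑ i ∈ S, b i →
      ∑ i ∈ S, (∏ j ∈ S, f (X i - b j)) / ∏ j ∈ S.erase i, f (X i - X j) = 0 := by
  have h0 : f 0 = 0 := by
    have := hodd 0
    rw [neg_zero] at this
    linear_combination this / 2
  induction n with
  | zero =>
    intro S hS X b _ _
    rw [Finset.card_eq_zero.1 hS]; simp
  | succ n ih =>
    intro S hS X b hX hsum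
    by_cases hn : n = 0
    · subst hn
      obtain ⟨p, rfl⟩ := Finset.card_eq_one.1 hS
      simp only [Finset.sum_singleton, Finset.prod_singleton] at hsum ⊢
      rw [hsum, sub_self, h0, zero_div]
    -- The generic case: `[X p + X q - b p - b q] ≠ 0`.
    have key : ∀ (b : ι → ℂ) (p q : ι), p ∈ S → q ∈ S → p ≠ q →
        f (X p + X q - (b p + b q)) ≠ 0 → ∑ i ∈ S, X i = ∑ i ∈ S, b i →
        ∑ i ∈ S, (∏ j ∈ S, f (X i - b j)) / ∏ j ∈ S.erase i, f (X i - X j) = 0 := by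
      intro b p q hp hq hpq hC hsum
      have hq' : q ∈ S.erase p := Finset.mem_erase.2 ⟨hpq.symm, hq⟩
      have hp' : p ∈ S.erase q := Finset.mem_erase.2 ⟨hpq, hp⟩
      have hPQ := hX p hp q hq hpq
      have hsp : ∀ g : ι → ℂ, ∑ i ∈ S, g i = g p + (g q + ∑ i ∈ (S.erase p).erase q, g i) := by
        intro g
        rw [← Finset.add_sum_erase S _ hp, ← Finset.add_sum_erase _ _ hq']
      have z1 := ih (S.erase p) (by rw [Finset.card_erase_of_mem hp, hS]; rfl) X
        (Function.update b q (b p + b q - X p))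
        (fun i hi j hj => hX i (Finset.mem_of_mem_erase hi) j (Finset.mem_of_mem_erase hj)) (by
          rw [← Finset.add_sum_erase _ _ hq', Finset.sum_update_of_mem hq',
            Finset.sdiff_singleton_eq_erase]
          rw [hsp, hsp] at hsum
          linear_combination hsum)
      have z2 := ih (S.erase q) (by rw [Finset.card_erase_of_mem hq, hS]; rfl) X
        (Function.update b p (b p + b q - X q))
        (fun i hi j hj => hX i (Finset.mem_of_mem_erase hi) j (Finset.mem_of_mem_erase hj)) (by
          rw [← Finset.add_sum_erase _ _ hp', Finset.sum_update_of_mem hp',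
            Finset.sdiff_singleton_eq_erase]
          rw [hsp, hsp] at hsum
          rw [Finset.erase_right_comm]
          linear_combination hsum)
      rw [← partial_fraction_drop f h0 S X b p q _ hp hq hpq hX] at z1
      rw [← partial_fraction_drop f h0 S X b q p _ hq hp hpq.symm hX] at z2
      have hC' : f (X p - X q) * f (X p + X q - (b p + b q)) ≠ 0 := mul_ne_zero hPQ hC
      have hlin : (f (X p - X q) * f (X p + X q - (b p + b q))) *
          ∑ i ∈ S, (∏ j ∈ S, f (X i - b j)) / ∏ j ∈ S.erase i, f (X i - X j)
          = f (X p - b p) * f (X p - b q) * 0 - f (X q - b p) * f (X q - b q) * 0 := by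
        nth_rewrite 1 [← z2]
        rw [← z1, Finset.mul_sum, Finset.mul_sum, Finset.mul_sum, ← Finset.sum_sub_distrib]
        refine Finset.sum_congr rfl fun i _ => ?_
        rw [← Finset.mul_prod_erase S _ hp, ← Finset.mul_prod_erase _ _ hq',
          Finset.erase_right_comm (a := q) (b := p)]
        have := three_term hodd hRiem (X i) (b p) (b q) (X p) (X q)
        linear_combination (∏ j ∈ (S.erase p).erase q, f (X i - b j)) /
          (∏ j ∈ S.erase i, f (X i - X j)) * this
      simp only [mul_zero, sub_zero] at hlin
      exact (mul_eq_zero.1 hlin).resolve_left hC'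
    obtain ⟨p, hp, q, hq, hpq⟩ := Finset.one_lt_card.1 (by omega : 1 < S.card)
    by_cases hn1 : n = 1
    -- With two poles, `X p + X q = b p + b q` and the two residues are opposite.
    · have hS2 : S = {p, q} := by
        symm
        apply Finset.eq_of_subset_of_card_le
        · intro y hy
          rcases Finset.mem_insert.1 hy with rfl | hy
          · exact hp
          · rwa [Finset.mem_singleton.1 hy]
        · rw [Finset.card_pair hpq]; omega
      have hX' := hX p hp q hq hpq
      rw [hS2, Finset.sum_pair hpq, Finset.sum_pair hpq] at hsum
      rw [hS2, Finset.sum_pair hpq, Finset.prod_pair hpq, Finset.prod_pair hpq,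
        Finset.erase_insert (by simpa using hpq), Finset.pair_comm,
        Finset.erase_insert (by simpa using hpq.symm), Finset.prod_singleton,
        Finset.prod_singleton]
      have e1 : f (X q - b p) = - f (X p - b q) := by
        rw [← hodd]; congr 1; linear_combination hsum
      have e2 : f (X q - b q) = - f (X p - b p) := by
        rw [← hodd]; congr 1; linear_combination hsum
      have e3 : f (X q - X p) = - f (X p - X q) := by
        rw [← hodd]; congr 1; ring
      rw [e1, e2, e3]
      field_simp
      ring
    -- With at least three poles, perturb `b p` and `b r` to reach the generic case.
    obtain ⟨r, hr⟩ : ((S.erase p).erase q).Nonempty := by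
      rw [← Finset.card_pos, Finset.card_erase_of_mem (Finset.mem_erase.2 ⟨hpq.symm, hq⟩),
        Finset.card_erase_of_mem hp]
      omega
    obtain ⟨hrq, hr⟩ := Finset.mem_erase.1 hr
    obtain ⟨hrp, hrS⟩ := Finset.mem_erase.1 hr
    let B : ℂ → ι → ℂ := fun t => b + Pi.single p t - Pi.single r t
    have hcont : Continuous fun t => ∑ i ∈ S, (∏ j ∈ S, f (X i - B t j)) /
        ∏ j ∈ S.erase i, f (X i - X j) := by
      have hBc : ∀ j, Continuous fun t => B t j := by
        intro j
        simp only [B, Pi.sub_apply, Pi.add_apply, Pi.single_apply]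
        refine (Continuous.add (by fun_prop) ?_).sub ?_ <;> split_ifs <;> fun_prop
      have := hdiff.continuous
      refine continuous_finsetSum _ fun i _ => Continuous.div_const ?_ _
      exact continuous_finsetProd _ fun j _ => this.comp (continuous_const.sub (hBc j))
    have hev : ∀ᶠ t in nhdsWithin (0 : ℂ) {0}ᶜ, ∑ i ∈ S, (∏ j ∈ S, f (X i - B t j)) /
        ∏ j ∈ S.erase i, f (X i - X j) = 0 := by
      filter_upwards [eventually_bracket_ne_zero hf hdiff (X p + X q - (b p + b q)) (-1) (by simp)]
        with t ht
      refine key (B t) p q hp hq hpq ?_ ?_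
      · have : X p + X q - (B t p + B t q) = X p + X q - (b p + b q) + -1 * t := by
          simp [B, hpq.symm, hrp.symm, hrq.symm]; ring
        rwa [this]
      · simp [B, Finset.sum_add_distrib, Finset.sum_sub_distrib, hp, hrS, hsum]
    have hB0 : B 0 = b := by ext; simp [B]
    have hlim := (hcont.tendsto 0).mono_left (nhdsWithin_le_nhds (s := {0}ᶜ))
    have := tendsto_nhds_unique hlim (tendsto_const_nhds.congr' (hev.mono fun t ht => ht.symm))
    simpa only [hB0] using this

/-- Partial fraction identity with one distinguished pole `-b`, solved for its residue. -/
lemma partial_fraction_option {ι : Type*} [Fintype ι] [DecidableEq ι] {f : ℂ → ℂ} (hf : f ≠ 0)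
    (hodd : ∀ t : ℂ, f (-t) = -f t) (hdiff : Differentiable ℂ f)
    (hRiem : ∀ x y u v : ℂ,
      f (x + y) * f (x - y) * f (u + v) * f (u - v) =
        f (x + u) * f (x - u) * f (y + v) * f (y - v)
          - f (x + v) * f (x - v) * f (y + u) * f (y - u))
    (w : ι → ℂ) (a : Option ι → ℂ) (b : ℂ) (hb : b = ∑ j, a j + ∑ i, w i)
    (hw : ∀ i j, i ≠ j → f (w i - w j) ≠ 0) (hbw : ∀ i, f (b + w i) ≠ 0) :
    ∑ i, (∏ j, f (w i + a j)) / (f (b + w i) * ∏ j ∈ univ.erase i, f (w i - w j))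
      = (∏ j, f (b - a j)) / ∏ i, f (b + w i) := by
  have hsymm : ∀ i, f (-b - w i) = - f (b + w i) := fun i => by rw [← hodd]; congr 1; ring
  have h := partial_fraction hf hodd hdiff hRiem _ (univ : Finset (Option ι)) rfl
    (fun o => o.elim (-b) w) (fun j => - a j) (by
      rintro (_ | i) - (_ | j) - hij
      · exact absurd rfl hij
      · simpa [hsymm] using hbw j
      · simpa [add_comm] using hbw i
      · exact hw i j fun e => hij (by rw [e])) (by
      rw [Fintype.sum_option]
      simp only [Option.elim, Finset.sum_neg_distrib, hb]; ring)
  have herase : (univ : Finset (Option ι)).erase none = univ.map Function.Embedding.some := by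
    ext (_ | i) <;> simp
  have herase' : ∀ i : ι, (univ : Finset (Option ι)).erase (some i)
      = insert none ((univ.erase i).map Function.Embedding.some) := by
    intro i; ext (_ | j) <;> simp
  have hn : ∀ i : ι, (∏ j ∈ (univ : Finset (Option ι)).erase (some i),
      f (w i - j.elim (-b) w)) = f (b + w i) * ∏ j ∈ univ.erase i, f (w i - w j) := by
    intro i
    rw [herase', Finset.prod_insert (by simp), Finset.prod_map]
    simp [add_comm]
  have hnum : ∏ j, f (-b + a j) = (-1) * ((-1) ^ Fintype.card ι * ∏ j, f (b - a j)) := by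
    have : ∀ j, f (-b + a j) = (-1) * f (b - a j) := fun j => by
      rw [neg_one_mul, ← hodd]; congr 1; ring
    simp only [this, Finset.prod_mul_distrib, Finset.prod_const, Finset.card_univ,
      Fintype.card_option]
    ring
  have hden : ∏ i, f (-b - w i) = (-1) ^ Fintype.card ι * ∏ i, f (b + w i) := by
    simp only [hsymm, Finset.prod_neg, Finset.card_univ]
  rw [Fintype.sum_option, herase, Finset.prod_map] at h
  simp only [Option.elim_some, Option.elim_none, hn, sub_neg_eq_add,
    Function.Embedding.some_apply] at h
  rw [hnum, hden, mul_div_assoc, mul_div_mul_left _ _ (pow_ne_zero _ (by norm_num))] at h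
  linear_combination h

/-! ### Summation over a simplex, in terms of one-step ratios -/

lemma step_algebra {B1 B0 P Z F Q1 Q0 A W1 W0 : ℂ} (hB1 : B1 ≠ 0) (hB0 : B0 ≠ 0) (hQ1 : Q1 ≠ 0)
    (hQ0 : Q0 ≠ 0) (h : W1 * (Z * F * Q0) = W0 * (A * Q1)) :
    B1 * P * (Z * F / (B1 * Q1)) * W1 = W0 * (A / (B0 * Q0) * (B0 * P)) := by
  field_simp
  linear_combination P * h

/-- Pairs `(k, i)` with `|k| = N + 1` and `k i ≠ 0` correspond to pairs `(k', i)` with `|k'| = N`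
through `k = k' + e_i`. -/
lemma sum_antidiagonalTuple_succ_level {n : ℕ} (N : ℕ) (g : (Fin n → ℕ) → Fin n → ℂ)
    (hg : ∀ k i, k i = 0 → g k i = 0) :
    ∑ k ∈ Finset.Nat.antidiagonalTuple n (N + 1), ∑ i, g k i
      = ∑ k ∈ Finset.Nat.antidiagonalTuple n N, ∑ i, g (k + Pi.single i 1) i := by
  rw [Finset.sum_comm, Finset.sum_comm (s := Finset.Nat.antidiagonalTuple n N)]
  refine Finset.sum_congr rfl fun i _ => ?_
  symm
  refine Finset.sum_of_injOn (fun k => k + Pi.single i 1) ?_ ?_ ?_ ?_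
  · intro k _ k' _ h
    exact add_right_cancel h
  · intro k hk
    simp only [Finset.mem_coe, Finset.Nat.mem_antidiagonalTuple] at hk ⊢
    simp [Finset.sum_add_distrib, hk]
  · intro k hk hk'
    apply hg
    by_contra hki
    apply hk'
    have hle : Pi.single i 1 ≤ k := by
      intro j
      by_cases hj : j = i
      · subst hj; simpa using Nat.one_le_iff_ne_zero.2 hki
      · simp [hj]
    refine ⟨k - Pi.single i 1, ?_, tsub_add_cancel_of_le hle⟩
    have hs : ∑ j, (k - Pi.single i 1 + Pi.single i 1 : Fin n → ℕ) j = N + 1 := by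
      rw [tsub_add_cancel_of_le hle]; exact Finset.Nat.mem_antidiagonalTuple.1 hk
    simp only [Pi.add_apply, Finset.sum_add_distrib, Finset.sum_pi_single',
      Finset.mem_univ, if_true] at hs
    simp only [Finset.mem_coe, Finset.Nat.mem_antidiagonalTuple]
    omega
  · intro k _; rfl

/-- Summation over the simplex `|k| = N`. The summand enters only through `W 0 = 1` and the
one-step ratios `W (k + e_i) / W k`; the balancing condition is `b = Σ a + Σ z`. -/
lemma simplex_summation {n : ℕ} {f : ℂ → ℂ} (hf : f ≠ 0)
    (hodd : ∀ t : ℂ, f (-t) = -f t) (hdiff : Differentiable ℂ f)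
    (hRiem : ∀ x y u v : ℂ,
      f (x + y) * f (x - y) * f (u + v) * f (u - v) =
        f (x + u) * f (x - u) * f (y + v) * f (y - v)
          - f (x + v) * f (x - v) * f (y + u) * f (y - u))
    (δ : ℂ) (hδ : ∀ k : ℤ, k ≠ 0 → f ((k : ℂ) * δ) ≠ 0)
    (z : Fin n → ℂ) (a : Option (Fin n) → ℂ) (b : ℂ) (hb : b = ∑ j, a j + ∑ i, z i)
    (W : (Fin n → ℕ) → ℂ) (hW0 : W 0 = 1) (N : ℕ)
    (hz : ∀ i j, i ≠ j → ∀ l : ℤ, |l| ≤ N → f (z i - z j + l * δ) ≠ 0)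
    (hbz : ∀ i, ∀ l : ℕ, l ≤ 2 * N → f (b + z i + l * δ) ≠ 0)
    (hW : ∀ k : Fin n → ℕ, ∀ i, ∑ j, k j < N →
      W (k + Pi.single i 1) * ((∏ j, f (z i + k i * δ + δ - z j)) * f (z i + k i * δ + b)
          * ∏ j ∈ univ.erase i, f (z i + k i * δ - (z j + k j * δ)))
        = W k * ((∏ j, f (z i + k i * δ + a j))
          * ∏ j ∈ univ.erase i, f (z i + k i * δ + δ - (z j + k j * δ)))) :
    ∑ k ∈ Finset.Nat.antidiagonalTuple n N, W k
      = (∏ j, sf f δ (b - a j) N) / (sf f δ δ N * ∏ i, sf f δ (b + z i) N) := by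
  have h0 : f 0 = 0 := by
    have := hodd 0
    rw [neg_zero] at this
    linear_combination this / 2
  have hkle : ∀ (k : Fin n → ℕ) i, k i ≤ ∑ j, k j := fun k i =>
    Finset.single_le_sum (f := k) (fun _ _ => Nat.zero_le _) (Finset.mem_univ i)
  have hwsum : ∀ (k : Fin n → ℕ), ∑ i, (z i + (k i : ℂ) * δ) = ∑ i, z i + ((∑ i, k i : ℕ) : ℂ) * δ := by
    intro k
    rw [Finset.sum_add_distrib, ← Finset.sum_mul]; push_cast; rfl
  induction N with
  | zero =>
    have : Finset.Nat.antidiagonalTuple n 0 = {0} := by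
      exact Finset.Nat.antidiagonalTuple_zero_right n
    rw [this]; simp [sf, hW0]
  | succ N ih =>
    have ih := ih (fun i j hij l hl => hz i j hij l (by push_cast; linarith))
      (fun i l hl => hbz i l (by omega)) (fun k i hk => hW k i (by omega))
    have hww : ∀ k : Fin n → ℕ, ∑ j, k j ≤ N + 1 → ∀ i j, i ≠ j →
        f (z i + k i * δ - (z j + k j * δ)) ≠ 0 := by
      intro k hk i j hij
      have h1 := hkle k i
      have h2 := hkle k j
      have := hz i j hij ((k i : ℤ) - k j) (by rw [abs_le]; constructor <;> push_cast <;> omega)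
      convert this using 2
      push_cast; ring
    have hbw : ∀ k : Fin n → ℕ, ∑ j, k j ≤ N + 1 → ∀ i,
        f (b + N * δ + (z i + k i * δ)) ≠ 0 := by
      intro k hk i
      have h1 := hkle k i
      have := hbz i (N + k i) (by omega)
      convert this using 2
      push_cast; ring
    set C : ℂ := f (((N + 1 : ℕ) : ℂ) * δ) * ∏ j, f (b + N * δ + z j) with hCdef
    have hC : C ≠ 0 := by
      refine mul_ne_zero ?_ (Finset.prod_ne_zero_iff.2 fun j _ => ?_)
      · have := hδ ((N + 1 : ℕ) : ℤ) (by omega)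
        exact_mod_cast this
      · have := hbz j N (by omega)
        convert this using 2; ring
    -- the partial fraction weights attached to the removal of one unit from `k i`
    let c : (Fin n → ℕ) → Fin n → ℂ := fun k i =>
      ((∏ j, f (z i + k i * δ - z j)) * f (z i + k i * δ + (b - δ))) /
        (f (b + N * δ + (z i + k i * δ)) *
          ∏ j ∈ univ.erase i, f (z i + k i * δ - (z j + k j * δ)))
    -- With zeros `-(b - δ), z j` the partial fraction identity expands the constant `C`.
    have hexp : ∀ k ∈ Finset.Nat.antidiagonalTuple n (N + 1),
        C * W k = ∑ i, (∏ j, f (b + N * δ + (z j + k j * δ))) * c k i * W k := by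
      intro k hk
      have hk := Finset.Nat.mem_antidiagonalTuple.1 hk
      have h := partial_fraction_option hf hodd hdiff hRiem (fun i => z i + k i * δ)
        (fun o => o.elim (b - δ) fun j => - z j) (b + N * δ) (by
          rw [hwsum, hk, Fintype.sum_option]
          simp only [Option.elim_none, Option.elim_some, Finset.sum_neg_distrib]
          push_cast; ring) (hww k hk.le) (hbw k hk.le)
      simp only [Fintype.prod_option, Option.elim_none, Option.elim_some] at h
      rw [← Finset.sum_mul, ← Finset.mul_sum]
      congr 1
      have hP : ∏ j, f (b + N * δ + (z j + k j * δ)) ≠ 0 :=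
        Finset.prod_ne_zero_iff.2 fun j _ => hbw k hk.le j
      rw [eq_div_iff hP] at h
      rw [hCdef, mul_comm (∏ j, f (b + N * δ + (z j + k j * δ)))]
      refine Eq.trans ?_ (h.symm.trans ?_)
      · congr 1
        · congr 1; push_cast; ring
        · exact Finset.prod_congr rfl fun j _ => by congr 1; ring
      · congr 1
        refine Finset.sum_congr rfl fun i _ => ?_
        simp only [c, ← sub_eq_add_neg]
        rw [mul_comm (f (z i + k i * δ + (b - δ)))]
    -- With zeros `-a j` the same identity sums the contributions of all `k + e_i` to a fixed `k`.
    have hstep : ∀ k ∈ Finset.Nat.antidiagonalTuple n N,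
        ∑ i, (∏ j, f (b + N * δ + (z j + ((k + Pi.single i 1 : Fin n → ℕ) j : ℂ) * δ)))
            * c (k + Pi.single i 1) i * W (k + Pi.single i 1)
          = W k * ∏ j, f (b + N * δ - a j) := by
      intro k hk
      have hk := Finset.Nat.mem_antidiagonalTuple.1 hk
      have h := partial_fraction_option hf hodd hdiff hRiem (fun i => z i + k i * δ)
        a (b + N * δ) (by rw [hwsum, hk, hb]; ring) (hww k (by omega)) (hbw k (by omega))
      have hP : ∏ j, f (b + N * δ + (z j + k j * δ)) ≠ 0 :=
        Finset.prod_ne_zero_iff.2 fun j _ => hbw k (by omega) j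
      rw [eq_div_iff hP] at h
      rw [← h, Finset.sum_mul, Finset.mul_sum]
      refine Finset.sum_congr rfl fun i _ => ?_
      have hs : ∑ j, (k + Pi.single i 1 : Fin n → ℕ) j ≤ N + 1 := by
        simp [Finset.sum_add_distrib, hk]
      have hki : (((k + Pi.single i 1 : Fin n → ℕ) i : ℕ) : ℂ) = k i + 1 := by simp
      have hkj : ∀ j ∈ univ.erase i, (k + Pi.single i 1 : Fin n → ℕ) j = k j := by
        intro j hj
        simp [Finset.ne_of_mem_erase hj]
      have e1 : z i + ((k i : ℂ) + 1) * δ = z i + k i * δ + δ := by ring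
      have hQ1 : ∏ j ∈ univ.erase i, f (z i + k i * δ + δ - (z j + k j * δ)) ≠ 0 := by
        refine Finset.prod_ne_zero_iff.2 fun j hj => ?_
        have := hww _ hs i j (Finset.ne_of_mem_erase hj).symm
        rwa [hki, hkj j hj, e1] at this
      have hQ0 : ∏ j ∈ univ.erase i, f (z i + k i * δ - (z j + k j * δ)) ≠ 0 :=
        Finset.prod_ne_zero_iff.2 fun j hj =>
          hww k (by omega) i j (Finset.ne_of_mem_erase hj).symm
      have hB1 : f (b + N * δ + (z i + k i * δ + δ)) ≠ 0 := by
        have := hbw _ hs i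
        rwa [hki, e1] at this
      have hB0 := hbw k (by omega) i
      have hw := hW k i (by omega)
      simp only [c]
      have hsplit : ∀ k : Fin n → ℕ, ∏ j, f (b + N * δ + (z j + k j * δ))
          = f (b + N * δ + (z i + k i * δ)) * ∏ j ∈ univ.erase i, f (b + N * δ + (z j + k j * δ)) :=
        fun k => (Finset.mul_prod_erase univ _ (Finset.mem_univ i)).symm
      rw [hsplit k, hsplit (k + Pi.single i 1)]
      have p1 : ∏ j ∈ univ.erase i,
          f (b + N * δ + (z j + ((k + Pi.single i 1 : Fin n → ℕ) j : ℂ) * δ))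
          = ∏ j ∈ univ.erase i, f (b + N * δ + (z j + k j * δ)) :=
        Finset.prod_congr rfl fun j hj => by rw [hkj j hj]
      have p2 : ∏ j ∈ univ.erase i, f (z i + k i * δ + δ -
          (z j + ((k + Pi.single i 1 : Fin n → ℕ) j : ℂ) * δ))
          = ∏ j ∈ univ.erase i, f (z i + k i * δ + δ - (z j + k j * δ)) :=
        Finset.prod_congr rfl fun j hj => by rw [hkj j hj]
      rw [p1, hki, e1, p2]
      have e2 : z i + k i * δ + δ + (b - δ) = z i + k i * δ + b := by ring
      rw [e2]
      exact step_algebra hB1 hB0 hQ1 hQ0 hw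
    have hmain : C * ∑ k ∈ Finset.Nat.antidiagonalTuple n (N + 1), W k
        = (∑ k ∈ Finset.Nat.antidiagonalTuple n N, W k) * ∏ j, f (b + N * δ - a j) := by
      rw [Finset.mul_sum, Finset.sum_congr rfl hexp, sum_antidiagonalTuple_succ_level,
        Finset.sum_congr rfl hstep, Finset.sum_mul]
      intro k i hki
      simp only [c]
      rw [Finset.prod_eq_zero (Finset.mem_univ i) (f := fun j => f (z i + k i * δ - z j))
        (by simp [hki, h0])]
      simp
    have hsf : ∀ y, sf f δ y (N + 1) = sf f δ y N * f (y + N * δ) := fun y =>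
      Finset.prod_range_succ _ _
    rw [← mul_right_inj' hC, hmain, ih]
    simp only [hsf, Finset.prod_mul_distrib]
    have t1 : ∏ j, f (b - a j + N * δ) = ∏ j, f (b + N * δ - a j) :=
      Finset.prod_congr rfl fun j _ => by congr 1; ring
    have t2 : ∏ j, f (b + z j + N * δ) = ∏ j, f (b + N * δ + z j) :=
      Finset.prod_congr rfl fun j _ => by congr 1; ring
    have t3 : f (δ + N * δ) = f (((N + 1 : ℕ) : ℂ) * δ) := by
      congr 1; push_cast; ring
    rw [t1, t2, t3]
    have hC1 := left_ne_zero_of_mul hC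
    have hC2 := right_ne_zero_of_mul hC
    rw [hCdef]
    generalize f (((N + 1 : ℕ) : ℂ) * δ) = u at hC1 ⊢
    field_simp

/-! ### The simplex series -/

lemma sf_zero (f : ℂ → ℂ) (δ y : ℂ) : sf f δ y 0 = 1 := by simp [sf]

lemma sf_succ (f : ℂ → ℂ) (δ y : ℂ) (k : ℕ) :
    sf f δ y (k + 1) = sf f δ y k * f (y + k * δ) := Finset.prod_range_succ _ _

lemma sf_ne_zero {f : ℂ → ℂ} {δ y : ℂ} {k : ℕ} (h : ∀ l : ℕ, l < k → f (y + l * δ) ≠ 0) :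
    sf f δ y k ≠ 0 :=
  Finset.prod_ne_zero_iff.2 fun l hl => h l (Finset.mem_range.1 hl)

lemma sf_add (f : ℂ → ℂ) (δ y : ℂ) (k l : ℕ) :
    sf f δ y (k + l) = sf f δ y k * sf f δ (y + k * δ) l := by
  rw [sf, Finset.prod_range_add]
  congr 1
  refine Finset.prod_congr rfl fun i _ => ?_
  congr 1; push_cast; ring

lemma sf_reflect {f : ℂ → ℂ} (hodd : ∀ t : ℂ, f (-t) = -f t) (δ y : ℂ) (M : ℕ) :
    sf f δ (y - M * δ) M = (-1) ^ M * sf f δ (δ - y) M := by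
  induction M generalizing y with
  | zero => simp [sf]
  | succ M ih =>
    have e : y - ((M + 1 : ℕ) : ℂ) * δ = (y - δ) - M * δ := by push_cast; ring
    rw [sf_succ, e, ih, add_comm M 1, sf_add]
    have h1 : f (y - δ - M * δ + M * δ) = - sf f δ (δ - y) 1 := by
      simp only [sf, Finset.prod_range_one, ← hodd]
      congr 1; push_cast; ring
    have h2 : δ - (y - δ) = δ - y + ((1 : ℕ) : ℂ) * δ := by push_cast; ring
    rw [h1, h2, pow_add]; ring

/-- Reversal of a shifted factorial of length `N - M` based at `y - s - Nδ`. -/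
lemma sf_reverse {f : ℂ → ℂ} (hodd : ∀ t : ℂ, f (-t) = -f t) (δ s y : ℂ) {M N : ℕ} (hM : M ≤ N)
    (p q : ℂ) (hp : p = -s - N * δ + y) (hq : q = δ + s - y) (h : sf f δ q M ≠ 0) :
    sf f δ p (N - M) = (-1) ^ M * (sf f δ p N / sf f δ q M) := by
  have h1 : sf f δ p N = sf f δ p (N - M) * ((-1) ^ M * sf f δ q M) := by
    have e : p + ((N - M : ℕ) : ℂ) * δ = (y - s) - M * δ := by
      rw [hp]; push_cast [hM]; ring
    have e' : q = δ - (y - s) := by rw [hq]; ring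
    rw [e', ← sf_reflect hodd, ← e, ← sf_add]
    congr 1; omega
  have h2 : ((-1 : ℂ) ^ M) * (-1) ^ M = 1 := by rw [← mul_pow]; norm_num
  rw [h1]
  field_simp
  linear_combination (-sf f δ p (N - M)) * h2

lemma Del_succ (f : ℂ → ℂ) {m : ℕ} (w : Fin (m + 1) → ℂ) :
    Del f w = (∏ j : Fin m, f (w 0 - w j.succ)) * Del f fun j => w j.succ := by
  simp only [Del, Finset.prod_filter]
  rw [Fin.prod_univ_succ, Fin.prod_univ_succ]
  simp only [lt_self_iff_false, if_false, one_mul, Fin.succ_pos, if_true]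
  congr 1
  refine Finset.prod_congr rfl fun i _ => ?_
  rw [Fin.prod_univ_succ]
  simp

lemma Del_ne_zero {f : ℂ → ℂ} {m : ℕ} {w : Fin m → ℂ}
    (h : ∀ i j, i ≠ j → f (w i - w j) ≠ 0) : Del f w ≠ 0 :=
  Finset.prod_ne_zero_iff.2 fun i _ => Finset.prod_ne_zero_iff.2 fun j hj =>
    h i j (ne_of_lt (Finset.mem_filter.1 hj).2)

/-- The difference product with the factors involving the index `i` separated. -/
lemma Del_split {f : ℂ → ℂ} (hodd : ∀ t : ℂ, f (-t) = -f t) {m : ℕ} (w : Fin m → ℂ) (i : Fin m) :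
    Del f w = (∏ p ∈ univ.erase i, ∏ q ∈ univ.erase i, if p < q then f (w p - w q) else 1)
      * (∏ j ∈ univ.erase i, if i < j then (1 : ℂ) else -1) * ∏ j ∈ univ.erase i, f (w i - w j) := by
  simp only [Del, Finset.prod_filter]
  rw [← Finset.mul_prod_erase univ _ (Finset.mem_univ i),
    ← Finset.mul_prod_erase univ _ (Finset.mem_univ i)]
  have h1 : ∀ p ∈ univ.erase i, (∏ q, if p < q then f (w p - w q) else 1)
      = (if p < i then f (w p - w i) else 1) *
        ∏ q ∈ univ.erase i, if p < q then f (w p - w q) else 1 := fun p _ =>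
    (Finset.mul_prod_erase univ _ (Finset.mem_univ i)).symm
  rw [Finset.prod_congr rfl h1, Finset.prod_mul_distrib]
  have h2 : ∀ j ∈ univ.erase i, (if i < j then (1 : ℂ) else -1) * f (w i - w j)
      = (if i < j then f (w i - w j) else 1) * (if j < i then f (w j - w i) else 1) := by
    intro j hj
    rcases lt_or_gt_of_ne (Finset.ne_of_mem_erase hj) with h | h
    · simp only [h, not_lt_of_gt h, if_true, if_false, neg_one_mul, one_mul, ← hodd, neg_sub]
    · simp [h, not_lt_of_gt h]
  have h3 := Finset.prod_congr rfl h2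
  rw [Finset.prod_mul_distrib, Finset.prod_mul_distrib] at h3
  simp only [lt_self_iff_false, if_false]
  linear_combination
    (-∏ p ∈ univ.erase i, ∏ q ∈ univ.erase i, if p < q then f (w p - w q) else 1) * h3

/-- Moving the single point `w i` changes only the factors of `Δ` containing it. -/
lemma Del_step {f : ℂ → ℂ} (hodd : ∀ t : ℂ, f (-t) = -f t) {m : ℕ} (w w' : Fin m → ℂ) (i : Fin m)
    (h : ∀ j, j ≠ i → w' j = w j) :
    Del f w' * ∏ j ∈ univ.erase i, f (w i - w j)
      = Del f w * ∏ j ∈ univ.erase i, f (w' i - w j) := by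
  rw [Del_split hodd w i, Del_split hodd w' i]
  have h1 : (∏ p ∈ univ.erase i, ∏ q ∈ univ.erase i, if p < q then f (w' p - w' q) else 1)
      = ∏ p ∈ univ.erase i, ∏ q ∈ univ.erase i, if p < q then f (w p - w q) else 1 :=
    Finset.prod_congr rfl fun p hp => Finset.prod_congr rfl fun q hq => by
      rw [h p (Finset.ne_of_mem_erase hp), h q (Finset.ne_of_mem_erase hq)]
  have h2 : ∏ j ∈ univ.erase i, f (w' i - w' j) = ∏ j ∈ univ.erase i, f (w' i - w j) :=
    Finset.prod_congr rfl fun q hq => by rw [h q (Finset.ne_of_mem_erase hq)]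
  rw [h1, h2]; ring

/-- The factor of `simplexTerm` belonging to one point `y = z i` with multiplicity `k`. -/
noncomputable def rowFactor (f : ℂ → ℂ) (δ : ℂ) {n : ℕ} (z : Fin n → ℂ) (a : Option (Fin n) → ℂ)
    (b y : ℂ) (k : ℕ) : ℂ :=
  (∏ j, sf f δ (y + a j) k) / (sf f δ (y + b) k * ∏ j, sf f δ (y - z j + δ) k)

/-- Summand of the multiple series over the simplex `|k| = N` with `n` points `z i`, `n + 1`
numerator parameters `a j` and one denominator parameter `b`. -/
noncomputable def simplexTerm (f : ℂ → ℂ) (δ : ℂ) {n : ℕ} (z : Fin n → ℂ)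
    (a : Option (Fin n) → ℂ) (b : ℂ) (k : Fin n → ℕ) : ℂ :=
  Del f (fun i => z i + (k i : ℂ) * δ) / Del f z * ∏ i, rowFactor f δ z a b (z i) (k i)

lemma rowFactor_zero (f : ℂ → ℂ) (δ : ℂ) {n : ℕ} (z : Fin n → ℂ) (a : Option (Fin n) → ℂ)
    (b y : ℂ) : rowFactor f δ z a b y 0 = 1 := by
  simp [rowFactor, sf_zero]

/-- The one-step ratio `W (k + e_i) / W k` of the simplex series, in cross-multiplied form. -/
lemma simplexTerm_step {f : ℂ → ℂ} (hodd : ∀ t : ℂ, f (-t) = -f t) (δ : ℂ) {n : ℕ} (z : Fin n → ℂ)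
    (a : Option (Fin n) → ℂ) (b : ℂ) (k : Fin n → ℕ) (i : Fin n)
    (h1 : f (z i + k i * δ + b) ≠ 0) (h2 : ∀ j, f (z i + k i * δ + δ - z j) ≠ 0) :
    simplexTerm f δ z a b (k + Pi.single i 1) *
        ((∏ j, f (z i + k i * δ + δ - z j)) * f (z i + k i * δ + b)
          * ∏ j ∈ univ.erase i, f (z i + k i * δ - (z j + k j * δ)))
      = simplexTerm f δ z a b k * ((∏ j, f (z i + k i * δ + a j))
          * ∏ j ∈ univ.erase i, f (z i + k i * δ + δ - (z j + k j * δ))) := by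
  have hki : (k + Pi.single i 1 : Fin n → ℕ) i = k i + 1 := by simp
  have hkj : ∀ j, j ≠ i → (k + Pi.single i 1 : Fin n → ℕ) j = k j := fun j hj => by simp [hj]
  have hD := Del_step hodd (fun j => z j + (k j : ℂ) * δ)
    (fun j => z j + ((k + Pi.single i 1 : Fin n → ℕ) j : ℂ) * δ) i
    (fun j hj => by simp only [hkj j hj])
  have e1 : z i + ((k i + 1 : ℕ) : ℂ) * δ = z i + k i * δ + δ := by push_cast; ring
  simp only [hki, e1] at hD
  have hsplit : ∀ k : Fin n → ℕ, ∏ j, rowFactor f δ z a b (z j) (k j)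
      = rowFactor f δ z a b (z i) (k i) * ∏ j ∈ univ.erase i, rowFactor f δ z a b (z j) (k j) :=
    fun k => (Finset.mul_prod_erase univ _ (Finset.mem_univ i)).symm
  have hrest : ∏ j ∈ univ.erase i, rowFactor f δ z a b (z j) ((k + Pi.single i 1 : Fin n → ℕ) j)
      = ∏ j ∈ univ.erase i, rowFactor f δ z a b (z j) (k j) :=
    Finset.prod_congr rfl fun j hj => by rw [hkj j (Finset.ne_of_mem_erase hj)]
  have hrow : rowFactor f δ z a b (z i) (k i + 1) *
      ((∏ j, f (z i + k i * δ + δ - z j)) * f (z i + k i * δ + b))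
      = rowFactor f δ z a b (z i) (k i) * ∏ j, f (z i + k i * δ + a j) := by
    have e2 : ∏ j, f (z i + a j + k i * δ) = ∏ j, f (z i + k i * δ + a j) :=
      Finset.prod_congr rfl fun j _ => by congr 1; ring
    have e3 : ∏ j, f (z i - z j + δ + k i * δ) = ∏ j, f (z i + k i * δ + δ - z j) :=
      Finset.prod_congr rfl fun j _ => by congr 1; ring
    have e4 : f (z i + b + k i * δ) = f (z i + k i * δ + b) := by congr 1; ring
    simp only [rowFactor, sf_succ, Finset.prod_mul_distrib]
    rw [e2, e3, e4]
    have h3 : ∏ j, f (z i + k i * δ + δ - z j) ≠ 0 := Finset.prod_ne_zero_iff.2 fun j _ => h2 j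
    generalize f (z i + k i * δ + b) = u at h1 ⊢
    generalize ∏ j, f (z i + k i * δ + δ - z j) = v at h3 ⊢
    generalize ∏ j, f (z i + k i * δ + a j) = w
    generalize sf f δ (z i + b) (k i) = p
    generalize ∏ j, sf f δ (z i - z j + δ) (k i) = q
    rw [div_mul_eq_mul_div, div_mul_eq_mul_div]
    rw [show p * u * (q * v) = (p * q) * (v * u) by ring, mul_div_mul_right _ _ (mul_ne_zero h3 h1)]
  simp only [simplexTerm]
  rw [hsplit k, hsplit (k + Pi.single i 1), hki, hrest]
  generalize (∏ j ∈ univ.erase i, rowFactor f δ z a b (z j) (k j)) = R at *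
  rw [mul_comm (∏ j, f (z i + k i * δ + a j))]
  linear_combination
    (rowFactor f δ z a b (z i) (k i + 1) *
      ((∏ j, f (z i + k i * δ + δ - z j)) * f (z i + k i * δ + b)) * R / Del f z) * hD +
    (R / Del f z * Del f (fun j => z j + (k j : ℂ) * δ) *
      ∏ j ∈ univ.erase i, f (z i + k i * δ + δ - (z j + k j * δ))) * hrow

lemma sum_simplexTerm {n : ℕ} {f : ℂ → ℂ} (hf : f ≠ 0)
    (hodd : ∀ t : ℂ, f (-t) = -f t) (hdiff : Differentiable ℂ f)
    (hRiem : ∀ x y u v : ℂ,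
      f (x + y) * f (x - y) * f (u + v) * f (u - v) =
        f (x + u) * f (x - u) * f (y + v) * f (y - v)
          - f (x + v) * f (x - v) * f (y + u) * f (y - u))
    (δ : ℂ) (hδ : ∀ k : ℤ, k ≠ 0 → f ((k : ℂ) * δ) ≠ 0)
    (z : Fin n → ℂ) (a : Option (Fin n) → ℂ) (b : ℂ) (hb : b = ∑ j, a j + ∑ i, z i) (N : ℕ)
    (hz : ∀ i j, i ≠ j → ∀ l : ℤ, |l| ≤ N → f (z i - z j + l * δ) ≠ 0)
    (hbz : ∀ i, ∀ l : ℕ, l ≤ 2 * N → f (b + z i + l * δ) ≠ 0) :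
    ∑ k ∈ Finset.Nat.antidiagonalTuple n N, simplexTerm f δ z a b k
      = (∏ j, sf f δ (b - a j) N) / (sf f δ δ N * ∏ i, sf f δ (b + z i) N) := by
  refine simplex_summation hf hodd hdiff hRiem δ hδ z a b hb _ ?_ N hz hbz ?_
  · have : Del f z ≠ 0 := Del_ne_zero fun i j hij => by
      simpa using hz i j hij 0 (by simp)
    simp [simplexTerm, rowFactor_zero, this]
  · intro k i hk
    have hki : k i ≤ ∑ j, k j :=
      Finset.single_le_sum (f := k) (fun _ _ => Nat.zero_le _) (Finset.mem_univ i)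
    apply simplexTerm_step hodd
    · have := hbz i (k i) (by omega)
      convert this using 2; ring
    · intro j
      by_cases hij : i = j
      · subst hij
        have := hδ (k i + 1) (by omega)
        convert this using 2; push_cast; ring
      · have := hz i j hij (k i + 1) (by rw [abs_le]; constructor <;> omega)
        convert this using 2; push_cast; ring

/-! ### Specialization to the very well-poised series -/

/-- The points `(-s - Nδ, x)` of the simplex series obtained from `E^{m,2}`. -/
noncomputable def simplexPoints (δ : ℂ) {m : ℕ} (x : Fin m → ℂ) (s : ℂ) (N : ℕ) :
    Fin (m + 1) → ℂ :=
  Fin.cons (-s - N * δ) x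

/-- The numerator parameters `c₂, c₁, a j - x j` of the simplex series obtained from `E^{m,2}`. -/
noncomputable def simplexParams {m : ℕ} (a x : Fin m → ℂ) (c1 c2 : ℂ) :
    Option (Fin (m + 1)) → ℂ :=
  fun o => o.elim c2 (Fin.cons c1 fun j => a j - x j)

lemma prod_simplexParams {m : ℕ} (a x : Fin m → ℂ) (c1 c2 : ℂ) (g : ℂ → ℂ) :
    ∏ j, g (simplexParams a x c1 c2 j) = g c2 * (g c1 * ∏ j, g (a j - x j)) := by
  rw [Fintype.prod_option, Fin.prod_univ_succ]
  simp [simplexParams]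

lemma prod_simplexPoints (δ : ℂ) {m : ℕ} (x : Fin m → ℂ) (s : ℂ) (N : ℕ) (g : ℂ → ℂ) :
    ∏ i, g (simplexPoints δ x s N i) = g (-s - N * δ) * ∏ i, g (x i) := by
  rw [Fin.prod_univ_succ]
  simp [simplexPoints]

lemma rowFactor_simplex (f : ℂ → ℂ) (δ : ℂ) {m : ℕ} (a x : Fin m → ℂ) (s c1 c2 b : ℂ) (N : ℕ)
    (y : ℂ) (k : ℕ) :
    rowFactor f δ (simplexPoints δ x s N) (simplexParams a x c1 c2) b y k
      = (sf f δ (y + c2) k * (sf f δ (y + c1) k * ∏ j, sf f δ (y + (a j - x j)) k)) /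
        (sf f δ (y + b) k * (sf f δ (y - (-s - N * δ) + δ) k * ∏ j, sf f δ (y - x j + δ) k)) := by
  rw [rowFactor, prod_simplexParams a x c1 c2 (fun t => sf f δ (y + t) k),
    prod_simplexPoints δ x s N (fun t => sf f δ (y - t + δ) k)]

lemma simplexTerm_simplex (f : ℂ → ℂ) (δ : ℂ) {m : ℕ} (a x : Fin m → ℂ) (s c1 c2 b : ℂ) (N k : ℕ)
    (μ : Fin m → ℕ) :
    simplexTerm f δ (simplexPoints δ x s N) (simplexParams a x c1 c2) b (Fin.cons k μ)
      = ((∏ j, f (-s - N * δ + k * δ - (x j + μ j * δ))) * Del f (fun j => x j + (μ j : ℂ) * δ)) /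
          ((∏ j, f (-s - N * δ - x j)) * Del f x)
        * (rowFactor f δ (simplexPoints δ x s N) (simplexParams a x c1 c2) b (-s - N * δ) k
          * ∏ i, rowFactor f δ (simplexPoints δ x s N) (simplexParams a x c1 c2) b (x i) (μ i)) := by
  rw [simplexTerm, Del_succ, Del_succ, Fin.prod_univ_succ]
  simp only [simplexPoints, Fin.cons_zero, Fin.cons_succ]

lemma row_zero_algebra {e E C1 C2 A B D X C1' C2' A' B' D' X' : ℂ} (he : e ≠ 0) (hE : E ≠ 0)
    (hB' : B' ≠ 0) (hD' : D' ≠ 0) (hX' : X' ≠ 0) :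
    (e * (C2 / C2') * (e * (C1 / C1') * (E * (A / A')))) /
        (e * (B / B') * (e * (D / D') * (E * (X / X'))))
      = C2 * (C1 * A) / (B * (D * X)) * (X' / A' * (B' / C1') * (D' / C2')) := by
  have h1 : (e * (C2 / C2') * (e * (C1 / C1') * (E * (A / A'))))
      = (e * e * E) * (C2 * (C1 * A) / (C2' * C1' * A')) := by
    field_simp
  have h2 : (e * (B / B') * (e * (D / D') * (E * (X / X'))))
      = (e * e * E) * ((B * (D * X)) / (B' * D' * X')) := by
    field_simp
  rw [h1, h2, mul_div_mul_left _ _ (by positivity)]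
  simp only [div_eq_mul_inv, mul_inv, inv_inv]
  ring

/-- Shortening the multiplicity of the point `-s - Nδ` from `N` to `N - M` produces the factors
of `E^{m,2}` that depend on `M = |μ|`. -/
lemma rowFactor_reverse {f : ℂ → ℂ} (hodd : ∀ t : ℂ, f (-t) = -f t) (δ : ℂ) {m : ℕ}
    (a x : Fin m → ℂ) (s c1 c2 d1 d2 : ℂ) {M N : ℕ} (hM : M ≤ N) (hd2 : d2 = -(N : ℂ) * δ)
    (h1 : sf f δ (δ + s - c1) M ≠ 0) (h2 : sf f δ (δ + s - c2) M ≠ 0)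
    (ha : ∀ j, sf f δ (δ + s + x j - a j) M ≠ 0) (hd : sf f δ d1 M ≠ 0) (hd' : sf f δ d2 M ≠ 0)
    (hx : ∀ j, sf f δ (s + x j) M ≠ 0) :
    rowFactor f δ (simplexPoints δ x s N) (simplexParams a x c1 c2) (δ + s - d1)
        (-s - N * δ) (N - M)
      = rowFactor f δ (simplexPoints δ x s N) (simplexParams a x c1 c2) (δ + s - d1)
          (-s - N * δ) N
        * ((∏ j, sf f δ (s + x j) M) / (∏ j, sf f δ (δ + s + x j - a j) M)
          * (sf f δ d1 M / sf f δ (δ + s - c1) M) * (sf f δ d2 M / sf f δ (δ + s - c2) M)) := by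
  rw [rowFactor_simplex, rowFactor_simplex]
  rw [sf_reverse hodd δ s c2 hM _ _ rfl rfl h2, sf_reverse hodd δ s c1 hM _ _ rfl rfl h1,
    sf_reverse hodd δ s (δ + s - d1) hM _ d1 rfl (by ring) hd,
    sf_reverse hodd δ s (s + N * δ + δ) hM (-s - N * δ - (-s - N * δ) + δ) d2 (by ring)
      (by rw [hd2]; ring) hd',
    Finset.prod_congr rfl fun j _ => sf_reverse hodd δ s (a j - x j) hM _
      (δ + s + x j - a j) rfl (by ring) (ha j),
    Finset.prod_congr rfl fun j _ => sf_reverse hodd δ s (δ - x j) hM (-s - N * δ - x j + δ)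
      (s + x j) (by ring) (by ring) (hx j)]
  simp only [Finset.prod_mul_distrib, Finset.prod_div_distrib]
  exact row_zero_algebra (by simp) (by simp) hd hd'
    (Finset.prod_ne_zero_iff.2 fun j _ => hx j)

lemma term_algebra {e g Dμ Z D ρ X A B C1 D2 C2 P Q U1 V1 U2 V2 H : ℂ} (he : e ≠ 0) (hH : H ≠ 0)
    (hD : D ≠ 0) :
    e * g * Dμ / (Z * D) * (ρ * (X / A * (B / C1) * (D2 / C2)) * (P / Q * (U1 / V1) * (U2 / V2)))
      = e * H * D / (Z * D) * ρ
        * (Dμ / D * (g / H) * (X / A * (P / Q)) * (B * D2 / (C1 * C2) * (U1 * U2 / (V1 * V2)))) := by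
  have h1 : e * g * Dμ / (Z * D) = e * H * D / (Z * D) * (Dμ / D * (g / H)) := by
    field_simp
  rw [h1]
  simp only [div_eq_mul_inv, mul_inv]
  ring

/-- Up to the constant `W(N, 0)`, the term `W(N - |μ|, μ)` of the simplex series is the `μ`-th
term of `E^{m,2}`. -/
lemma simplexTerm_eq_Eterm {f : ℂ → ℂ} (hodd : ∀ t : ℂ, f (-t) = -f t) (δ : ℂ) {m : ℕ}
    (a x : Fin m → ℂ) (s c1 c2 d1 d2 : ℂ) {N : ℕ} (hd2 : d2 = -(N : ℂ) * δ)
    (μ : Fin m → ℕ) (hM : ∑ i, μ i ≤ N)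
    (h1 : sf f δ (δ + s - c1) (∑ i, μ i) ≠ 0) (h2 : sf f δ (δ + s - c2) (∑ i, μ i) ≠ 0)
    (ha : ∀ j, sf f δ (δ + s + x j - a j) (∑ i, μ i) ≠ 0)
    (hd : sf f δ d1 (∑ i, μ i) ≠ 0) (hd' : sf f δ d2 (∑ i, μ i) ≠ 0)
    (hx : ∀ j, sf f δ (s + x j) (∑ i, μ i) ≠ 0)
    (hxs : ∀ j, f (x j + s) ≠ 0) (hDel : Del f x ≠ 0) :
    simplexTerm f δ (simplexPoints δ x s N) (simplexParams a x c1 c2) (δ + s - d1)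
        (Fin.cons (N - ∑ i, μ i) μ)
      = simplexTerm f δ (simplexPoints δ x s N) (simplexParams a x c1 c2) (δ + s - d1)
          (Fin.cons N 0) * Eterm f δ a x s ![c1, c2] ![d1, d2] μ := by
  rw [simplexTerm_simplex, simplexTerm_simplex,
    rowFactor_reverse hodd δ a x s c1 c2 d1 d2 hM hd2 h1 h2 ha hd hd' hx]
  simp only [Pi.zero_apply, rowFactor_zero, Finset.prod_const_one, mul_one, Nat.cast_zero,
    zero_mul, add_zero]
  have hg : ∏ j, f (-s - N * δ + ((N - ∑ i, μ i : ℕ) : ℂ) * δ - (x j + μ j * δ))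
      = (-1) ^ m * ∏ j, f (x j + s + (((∑ i, μ i) + μ j : ℕ) : ℂ) * δ) := by
    rw [← Fin.prod_const, ← Finset.prod_mul_distrib]
    refine Finset.prod_congr rfl fun j _ => ?_
    rw [neg_one_mul, ← hodd, Nat.cast_sub hM]
    congr 1; push_cast; ring
  have hh : ∏ j, f (-s - N * δ + N * δ - x j) = (-1) ^ m * ∏ j, f (x j + s) := by
    rw [← Fin.prod_const, ← Finset.prod_mul_distrib]
    refine Finset.prod_congr rfl fun j _ => ?_
    rw [neg_one_mul, ← hodd]
    congr 1; ring
  have hrows : ∏ i, rowFactor f δ (simplexPoints δ x s N) (simplexParams a x c1 c2) (δ + s - d1)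
        (x i) (μ i)
      = (∏ j, ∏ i, sf f δ (x i - x j + a j) (μ i) / sf f δ (x i - x j + δ) (μ i))
        * (∏ i, sf f δ (x i + c1) (μ i) / sf f δ (x i + δ + s - d1) (μ i))
        * (∏ i, sf f δ (x i + c2) (μ i) / sf f δ (x i + δ + s - d2) (μ i)) := by
    rw [Finset.prod_comm, ← Finset.prod_mul_distrib, ← Finset.prod_mul_distrib]
    refine Finset.prod_congr rfl fun i _ => ?_
    rw [rowFactor_simplex, Finset.prod_div_distrib]
    have e1 : x i + (δ + s - d1) = x i + δ + s - d1 := by ring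
    have e2 : x i - (-s - N * δ) + δ = x i + δ + s - d2 := by rw [hd2]; ring
    have e3 : ∏ j, sf f δ (x i + (a j - x j)) (μ i) = ∏ j, sf f δ (x i - x j + a j) (μ i) :=
      Finset.prod_congr rfl fun j _ => by congr 1; ring
    rw [e1, e2, e3]
    simp only [div_eq_mul_inv, mul_inv]
    ring
  rw [hg, hh, hrows]
  simp only [Eterm, Fin.prod_univ_two, Matrix.cons_val_zero, Matrix.cons_val_one,
    Finset.prod_mul_distrib, Finset.prod_div_distrib]
  have hH : ∏ j, f (x j + s) ≠ 0 := Finset.prod_ne_zero_iff.2 fun j _ => hxs j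
  have hm : ((-1 : ℂ) ^ m) ≠ 0 := by simp
  exact term_algebra hm hH hDel

lemma closed_form_algebra {K1 K2 KA LB e E n C1 C2 A D B Δ X Y H S : ℂ} (he : e ≠ 0) (hE : E ≠ 0)
    (hn : n * n = 1) (hD : D ≠ 0) (hY : Y ≠ 0) (hC1 : C1 ≠ 0) (hC2 : C2 ≠ 0) (hA : A ≠ 0)
    (hX : X ≠ 0) (hB : B ≠ 0) (hΔ : Δ ≠ 0) (hLB : LB ≠ 0) (hS : X * Y = H * S) :
    K2 * (K1 * KA) / (Δ * (B * LB))
      = e * H * D / (e * Y * D) * (n * C2 * (n * C1 * (E * A)) / (B * (Δ * (E * X))))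
        * (K1 / C1 * (K2 / C2) * (S * KA / (A * LB))) := by
  field_simp
  linear_combination (K2 * K1 * KA) * hS - (K2 * K1 * KA * H * S) * hn

/-- The summation formula when, in addition to the denominators of `E^{m,2}`, the brackets
`[x i + s + lδ]`, `[d₁ + lδ]` and `[δ + s - d₁ + x i + lδ]` with small `l` do not vanish. -/
lemma generic_summation {f : ℂ → ℂ} (hf : f ≠ 0)
    (hodd : ∀ t : ℂ, f (-t) = -f t) (hdiff : Differentiable ℂ f)
    (hRiem : ∀ x y u v : ℂ,
      f (x + y) * f (x - y) * f (u + v) * f (u - v) =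
        f (x + u) * f (x - u) * f (y + v) * f (y - v)
          - f (x + v) * f (x - v) * f (y + u) * f (y - u))
    (δ : ℂ) (hδ : ∀ k : ℤ, k ≠ 0 → f ((k : ℂ) * δ) ≠ 0)
    (m N : ℕ) (a x : Fin m → ℂ) (s c1 c2 d1 d2 : ℂ)
    (hd2 : d2 = -(N : ℂ) * δ)
    (hbal : (∑ i, a i) + c1 + c2 + d1 + d2 = δ + 2 * s)
    (hL1 : ∀ i j, i ≠ j → f (x i - x j) ≠ 0)
    (hL3 : ∀ (j : Fin m) (l : ℕ), l < N → f (δ + s + x j - a j + (l : ℂ) * δ) ≠ 0)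
    (hL4 : ∀ (i j : Fin m) (l : ℕ), l < N → f (x i - x j + δ + (l : ℂ) * δ) ≠ 0)
    (hc1 : ∀ l : ℕ, l < N → f (δ + s - c1 + (l : ℂ) * δ) ≠ 0)
    (hc2 : ∀ l : ℕ, l < N → f (δ + s - c2 + (l : ℂ) * δ) ≠ 0)
    (hG1 : ∀ i, ∀ l : ℕ, l ≤ 2 * N → f (x i + s + l * δ) ≠ 0)
    (hG2 : ∀ l : ℤ, |l| ≤ N + 1 → f (d1 + l * δ) ≠ 0)
    (hG3 : ∀ i, ∀ l : ℕ, l ≤ 2 * N → f (δ + s - d1 + x i + l * δ) ≠ 0) :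
    ∑ k ∈ Finset.Nat.antidiagonalTuple (m + 1) N,
        Eterm f δ a x s ![c1, c2] ![d1, d2] (Fin.tail k) =
      (sf f δ (δ + s - c1 - d1) N / sf f δ (δ + s - c1) N)
        * (sf f δ (δ + s - c2 - d1) N / sf f δ (δ + s - c2) N)
        * ∏ i, sf f δ (δ + s + x i) N * sf f δ (δ + s + x i - a i - d1) N
            / (sf f δ (δ + s + x i - a i) N * sf f δ (δ + s + x i - d1) N) := by
  have hneg : ∀ {y : ℂ}, f (-y) ≠ 0 → f y ≠ 0 := fun {y} h h' => h (by rw [hodd, h', neg_zero])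
  set b := δ + s - d1 with hb
  have hN : ((-1 : ℂ) ^ N) * (-1) ^ N = 1 := by rw [← mul_pow]; norm_num
  have hsum := sum_simplexTerm hf hodd hdiff hRiem δ hδ (simplexPoints δ x s N)
    (simplexParams a x c1 c2) b (by
      rw [Fintype.sum_option, Fin.sum_univ_succ, Fin.sum_univ_succ]
      simp only [simplexPoints, simplexParams, Option.elim_none, Option.elim_some, Fin.cons_zero,
        Fin.cons_succ, Finset.sum_sub_distrib]
      rw [hb]
      linear_combination hd2 - hbal) N (by
      intro i j hij l hl
      rw [abs_le] at hl
      induction i using Fin.cases with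
      | zero =>
        induction j using Fin.cases with
        | zero => exact absurd rfl hij
        | succ j =>
          simp only [simplexPoints, Fin.cons_zero, Fin.cons_succ]
          apply hneg
          have := hG1 j (N - l).toNat (by omega)
          convert this using 2
          have : (((N - l).toNat : ℕ) : ℂ) = (((N - l).toNat : ℤ) : ℂ) := by norm_cast
          rw [this, Int.toNat_of_nonneg (by omega)]
          push_cast; ring
      | succ i =>
        induction j using Fin.cases with
        | zero =>
          simp only [simplexPoints, Fin.cons_zero, Fin.cons_succ]
          have := hG1 i (N + l).toNat (by omega)
          convert this using 2
          have : (((N + l).toNat : ℕ) : ℂ) = (((N + l).toNat : ℤ) : ℂ) := by norm_cast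
          rw [this, Int.toNat_of_nonneg (by omega)]
          push_cast; ring
        | succ j =>
          simp only [simplexPoints, Fin.cons_succ]
          have hij' : i ≠ j := fun h => hij (by rw [h])
          rcases lt_trichotomy l 0 with h | h | h
          · apply hneg
            have := hL4 j i (-l - 1).toNat (by omega)
            convert this using 2
            have : (((-l - 1).toNat : ℕ) : ℂ) = (((-l - 1).toNat : ℤ) : ℂ) := by norm_cast
            rw [this, Int.toNat_of_nonneg (by omega)]
            push_cast; ring
          · simpa [h] using hL1 i j hij'
          · have := hL4 i j (l - 1).toNat (by omega)
            convert this using 2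
            have : (((l - 1).toNat : ℕ) : ℂ) = (((l - 1).toNat : ℤ) : ℂ) := by norm_cast
            rw [this, Int.toNat_of_nonneg (by omega)]
            push_cast; ring) (by
      intro i l hl
      induction i using Fin.cases with
      | zero =>
        simp only [simplexPoints, Fin.cons_zero]
        apply hneg
        have := hG2 (N - 1 - l) (by rw [abs_le]; constructor <;> omega)
        convert this using 2
        rw [hb]; push_cast; ring
      | succ i =>
        simp only [simplexPoints, Fin.cons_succ]
        exact hG3 i l hl)
  have hDel : Del f x ≠ 0 := Del_ne_zero hL1
  have s1 : ∀ M ≤ N, sf f δ (δ + s - c1) M ≠ 0 := fun M hM => sf_ne_zero fun l hl => hc1 l (by omega)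
  have s2 : ∀ M ≤ N, sf f δ (δ + s - c2) M ≠ 0 := fun M hM => sf_ne_zero fun l hl => hc2 l (by omega)
  have s3 : ∀ M ≤ N, ∀ j, sf f δ (δ + s + x j - a j) M ≠ 0 :=
    fun M hM j => sf_ne_zero fun l hl => hL3 j l (by omega)
  have s4 : ∀ M ≤ N, sf f δ d1 M ≠ 0 := fun M hM => sf_ne_zero fun l hl => by
    simpa using hG2 l (by rw [abs_le]; constructor <;> omega)
  have s5 : ∀ M ≤ N, sf f δ d2 M ≠ 0 := fun M hM => sf_ne_zero fun l hl => by
    have := hδ ((l : ℤ) - N) (by omega)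
    convert this using 2
    rw [hd2]; push_cast; ring
  have s6 : ∀ M ≤ N, ∀ j, sf f δ (s + x j) M ≠ 0 := fun M hM j => sf_ne_zero fun l hl => by
    rw [add_comm s]; exact hG1 j l (by omega)
  have s7 : ∀ j, f (x j + s) ≠ 0 := fun j => by simpa using hG1 j 0 (by omega)
  set W0 := simplexTerm f δ (simplexPoints δ x s N) (simplexParams a x c1 c2) b (Fin.cons N 0)
    with hW0
  have hterm : ∀ k ∈ Finset.Nat.antidiagonalTuple (m + 1) N,
      simplexTerm f δ (simplexPoints δ x s N) (simplexParams a x c1 c2) b k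
        = W0 * Eterm f δ a x s ![c1, c2] ![d1, d2] (Fin.tail k) := by
    intro k hk
    rw [Finset.Nat.mem_antidiagonalTuple, Fin.sum_univ_succ] at hk
    have hk' : k = Fin.cons (N - ∑ i, Fin.tail k i) (Fin.tail k) := by
      conv_lhs => rw [← Fin.cons_self_tail k]
      congr 1
      simp only [Fin.tail]; omega
    have hle : ∑ i, Fin.tail k i ≤ N := by simp only [Fin.tail]; omega
    conv_lhs => rw [hk']
    exact simplexTerm_eq_Eterm hodd δ a x s c1 c2 d1 d2 hd2 (Fin.tail k) hle (s1 _ hle) (s2 _ hle)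
      (s3 _ hle) (s4 _ hle) (s5 _ hle) (s6 _ hle) s7 hDel
  rw [Finset.sum_congr rfl hterm, ← Finset.mul_sum,
    prod_simplexParams a x c1 c2 (fun t => sf f δ (b - t) N),
    prod_simplexPoints δ x s N (fun t => sf f δ (b + t) N)] at hsum
  -- Reflection turns the factorials at the point `-s - Nδ` into those of `E^{m,2}`.
  have hrev : ∀ p q y : ℂ, p = -s - N * δ + y → q = δ + s - y →
      sf f δ p N = (-1) ^ N * sf f δ q N := by
    intro p q y hp hq
    have e : p = (y - s) - N * δ := by rw [hp]; ring
    have e' : q = δ - (y - s) := by rw [hq]; ring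
    rw [e', ← sf_reflect hodd, ← e]
  have hB : sf f δ (b + (-s - N * δ)) N ≠ 0 := by
    rw [hrev _ d1 b (by ring) (by rw [hb]; ring)]
    exact mul_ne_zero (by simp) (s4 N le_rfl)
  have hW0' : W0 = ((-1) ^ m * (∏ j, f (x j + s)) * Del f x) /
        ((-1) ^ m * (∏ j, f (s + x j + N * δ)) * Del f x) *
      ((-1) ^ N * sf f δ (δ + s - c2) N * ((-1) ^ N * sf f δ (δ + s - c1) N *
        (((-1) ^ N) ^ m * ∏ j, sf f δ (δ + s + x j - a j) N)) /
      (sf f δ (b + (-s - N * δ)) N * (sf f δ δ N *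
        (((-1) ^ N) ^ m * ∏ j, sf f δ (s + x j) N)))) := by
    rw [hW0, simplexTerm_simplex, rowFactor_simplex]
    simp only [Pi.zero_apply, rowFactor_zero, Finset.prod_const_one, mul_one, Nat.cast_zero,
      zero_mul, add_zero]
    rw [hrev (-s - N * δ + c1) (δ + s - c1) c1 rfl rfl, hrev _ (δ + s - c2) c2 rfl rfl,
      Finset.prod_congr rfl fun j _ => hrev _ (δ + s + x j - a j) (a j - x j) rfl (by ring),
      Finset.prod_congr rfl fun j _ => hrev (-s - N * δ - x j + δ) (s + x j) (δ - x j) (by ring)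
        (by ring), Finset.prod_mul_distrib, Finset.prod_mul_distrib, Fin.prod_const,
      add_comm (-s - N * δ) b, sub_self, zero_add]
    congr 2
    · congr 1
      rw [← Fin.prod_const, ← Finset.prod_mul_distrib]
      refine Finset.prod_congr rfl fun j _ => ?_
      rw [neg_one_mul, ← hodd]; congr 1; ring
    · congr 1
      rw [← Fin.prod_const, ← Finset.prod_mul_distrib]
      refine Finset.prod_congr rfl fun j _ => ?_
      rw [neg_one_mul, ← hodd]; congr 1; ring
  have hY : ∏ j, f (s + x j + N * δ) ≠ 0 := Finset.prod_ne_zero_iff.2 fun j _ => by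
    rw [add_comm s]; exact hG1 j N (by omega)
  have hH : ∏ j, f (x j + s) ≠ 0 := Finset.prod_ne_zero_iff.2 fun j _ => s7 j
  have hA : ∏ j, sf f δ (δ + s + x j - a j) N ≠ 0 :=
    Finset.prod_ne_zero_iff.2 fun j _ => s3 N le_rfl j
  have hX : ∏ j, sf f δ (s + x j) N ≠ 0 := Finset.prod_ne_zero_iff.2 fun j _ => s6 N le_rfl j
  have hΔ : sf f δ δ N ≠ 0 := sf_ne_zero fun l _ => by
    have := hδ ((l : ℤ) + 1) (by omega)
    convert this using 2
    push_cast; ring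
  have hLB : ∏ j, sf f δ (b + x j) N ≠ 0 := Finset.prod_ne_zero_iff.2 fun j _ =>
    sf_ne_zero fun l hl => hG3 j l (by omega)
  have hne : W0 ≠ 0 := by
    rw [hW0']
    have := s1 N le_rfl
    have := s2 N le_rfl
    have h1 : ((-1 : ℂ) ^ m) ≠ 0 := by simp
    have h2 : ((-1 : ℂ) ^ N) ≠ 0 := by simp
    simp only [ne_eq, mul_eq_zero, div_eq_zero_iff, pow_eq_zero_iff', not_or]
    simp_all
  -- Both sides equal `∏ j, [s + x j]_{N+1}`.
  have hXY : (∏ j, sf f δ (s + x j) N) * ∏ j, f (s + x j + N * δ)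
      = (∏ j, f (x j + s)) * ∏ j, sf f δ (δ + s + x j) N := by
    rw [← Finset.prod_mul_distrib, ← Finset.prod_mul_distrib]
    refine Finset.prod_congr rfl fun j _ => ?_
    rw [← sf_succ, add_comm N 1, sf_add]
    congr 1
    · simp [sf, add_comm]
    · congr 1; push_cast; ring
  rw [← mul_right_inj' hne, hsum, hW0']
  refine (closed_form_algebra (e := (-1) ^ m) (E := ((-1) ^ N) ^ m) (by simp) (by simp) hN hDel hY
    (s1 N le_rfl) (s2 N le_rfl) hA hX hB hΔ hLB hXY).trans ?_
  congr 1
  rw [Finset.prod_div_distrib, Finset.prod_mul_distrib, Finset.prod_mul_distrib]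
  have e1 : b - c1 = δ + s - c1 - d1 := by rw [hb]; ring
  have e2 : b - c2 = δ + s - c2 - d1 := by rw [hb]; ring
  have e3 : ∏ j, sf f δ (b - (a j - x j)) N = ∏ j, sf f δ (δ + s + x j - a j - d1) N :=
    Finset.prod_congr rfl fun j _ => by congr 1; rw [hb]; ring
  have e4 : ∏ j, sf f δ (b + x j) N = ∏ j, sf f δ (δ + s + x j - d1) N :=
    Finset.prod_congr rfl fun j _ => by congr 1; rw [hb]; ring
  rw [e1, e2, e3, e4]

/-! ### Termination and continuity -/

/-- Because `[d₂]_{|μ|} = 0` for `|μ| > N`, the series is a sum over `|μ| ≤ N`, here encoded as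
the tails of the compositions of `N` into `m + 1` parts. -/
lemma Evw_eq_sum {f : ℂ → ℂ} (h0 : f 0 = 0) (δ : ℂ) {m : ℕ} (a x : Fin m → ℂ)
    (s c1 c2 d1 d2 : ℂ) {N : ℕ} (hd2 : d2 = -(N : ℂ) * δ) :
    Evw f δ a x s ![c1, c2] ![d1, d2] = ∑ k ∈ Finset.Nat.antidiagonalTuple (m + 1) N,
      Eterm f δ a x s ![c1, c2] ![d1, d2] (Fin.tail k) := by
  classical
  have hinj : Set.InjOn (fun k : Fin (m + 1) → ℕ => (Fin.tail k : Fin m → ℕ))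
      (Finset.Nat.antidiagonalTuple (m + 1) N : Set (Fin (m + 1) → ℕ)) := by
    intro k hk k' hk' h
    simp only [Finset.mem_coe, Finset.Nat.mem_antidiagonalTuple, Fin.sum_univ_succ] at hk hk'
    have ht : ∀ i : Fin m, k i.succ = k' i.succ := fun i => congrFun h i
    simp only [ht] at hk
    funext i
    induction i using Fin.cases with
    | zero => omega
    | succ i => exact ht i
  rw [Evw, tsum_eq_sum (s := (Finset.Nat.antidiagonalTuple (m + 1) N).image
    (fun k => (Fin.tail k : Fin m → ℕ))), Finset.sum_image hinj]
  intro μ hμ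
  have hlt : N < ∑ i, μ i := by
    by_contra hle
    refine hμ (Finset.mem_image.2 ⟨Fin.cons (N - ∑ i, μ i) μ, ?_, Fin.tail_cons _ _⟩)
    rw [Finset.Nat.mem_antidiagonalTuple, Fin.sum_univ_succ]
    simp only [Fin.cons_zero, Fin.cons_succ]
    omega
  have hz : sf f δ d2 (∑ i, μ i) = 0 :=
    Finset.prod_eq_zero (Finset.mem_range.2 hlt) (by rw [hd2, neg_mul, neg_add_cancel, h0])
  simp [Eterm, Fin.prod_univ_two, hz]

lemma continuousAt_sf {f : ℂ → ℂ} (hf : Continuous f) (δ : ℂ) {g : ℂ → ℂ} {t : ℂ}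
    (hg : ContinuousAt g t) (k : ℕ) : ContinuousAt (fun t => sf f δ (g t) k) t := by
  unfold sf
  fun_prop

/-- Continuity of the `μ`-th term of `E^{m,2}` along a curve `(s(t), d₁(t))`. -/
lemma continuousAt_Eterm {f : ℂ → ℂ} (hf : Continuous f) (δ : ℂ) {m : ℕ} (a x : Fin m → ℂ)
    (c1 c2 d2 : ℂ) {σ τ : ℂ → ℂ} {t : ℂ} (hσ : ContinuousAt σ t) (hτ : ContinuousAt τ t)
    (μ : Fin m → ℕ)
    (h2 : ∀ i, f (x i + σ t) ≠ 0)
    (h3 : ∀ j, sf f δ (δ + σ t + x j - a j) (∑ i, μ i) ≠ 0)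
    (h5 : sf f δ (δ + σ t - c1) (∑ i, μ i) ≠ 0) (h5' : sf f δ (δ + σ t - c2) (∑ i, μ i) ≠ 0)
    (h6 : ∀ i, sf f δ (x i + δ + σ t - τ t) (μ i) ≠ 0)
    (h6' : ∀ i, sf f δ (x i + δ + σ t - d2) (μ i) ≠ 0) :
    ContinuousAt (fun t => Eterm f δ a x (σ t) ![c1, c2] ![τ t, d2] μ) t := by
  simp only [Eterm, Fin.prod_univ_two, Matrix.cons_val_zero, Matrix.cons_val_one]
  have hs : ∀ (g : ℂ → ℂ) (k : ℕ), ContinuousAt g t → ContinuousAt (fun t => sf f δ (g t) k) t :=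
    fun g k hg => continuousAt_sf hf δ hg k
  have hfc : ∀ g : ℂ → ℂ, ContinuousAt g t → ContinuousAt (fun t => f (g t)) t :=
    fun g hg => hf.continuousAt.comp hg
  refine ((continuousAt_const.mul ?_).mul ?_).mul ?_
  · exact tendsto_finsetProd _ fun i _ => (hfc _ (by fun_prop)).div (hfc _ (by fun_prop)) (h2 i)
  · exact tendsto_finsetProd _ fun j _ =>
      ((hs _ _ (by fun_prop)).div (hs _ _ (by fun_prop)) (h3 j)).mul continuousAt_const
  · exact (((hs _ _ (by fun_prop)).div (hs _ _ (by fun_prop)) h5).mul (tendsto_finsetProd _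
      fun i _ => continuousAt_const.div (hs _ _ (by fun_prop)) (h6 i))).mul
      ((continuousAt_const.div (hs _ _ (by fun_prop)) h5').mul (tendsto_finsetProd _
      fun i _ => continuousAt_const.div (hs _ _ (by fun_prop)) (h6' i)))

/-- Dougall/Jackson summation formula for `E^{m,2}` (Rosengren; Corollary 5.2 of [R2]). -/
theorem dougall_jackson_summation
    (f : ℂ → ℂ) (hf : f ≠ 0) (hodd : ∀ t : ℂ, f (-t) = -f t) (hdiff : Differentiable ℂ f)
    (hRiem : ∀ x y u v : ℂ,
      f (x + y) * f (x - y) * f (u + v) * f (u - v) =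
        f (x + u) * f (x - u) * f (y + v) * f (y - v)
          - f (x + v) * f (x - v) * f (y + u) * f (y - u))
    (δ : ℂ) (hδ : ∀ k : ℤ, k ≠ 0 → f ((k : ℂ) * δ) ≠ 0)
    (m N : ℕ) (a x : Fin m → ℂ) (s c1 c2 d1 d2 : ℂ)
    (hd2 : d2 = -(N : ℂ) * δ)
    (hbal : (∑ i, a i) + c1 + c2 + d1 + d2 = δ + 2 * s)
    (hL1 : ∀ i j, i ≠ j → f (x i - x j) ≠ 0)
    (hL2 : ∀ i, f (x i + s) ≠ 0)
    (hL3 : ∀ (j : Fin m) (l : ℕ), l < N → f (δ + s + x j - a j + (l : ℂ) * δ) ≠ 0)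
    (hL4 : ∀ (i j : Fin m) (l : ℕ), l < N → f (x i - x j + δ + (l : ℂ) * δ) ≠ 0)
    (hL5 : ∀ (k : Fin 2) (l : ℕ), l < N → f (δ + s - ![c1, c2] k + (l : ℂ) * δ) ≠ 0)
    (hL6 : ∀ (i : Fin m) (k : Fin 2) (l : ℕ), l < N →
      f (x i + δ + s - ![d1, d2] k + (l : ℂ) * δ) ≠ 0) :
    Evw f δ a x s ![c1, c2] ![d1, d2] =
      (sf f δ (δ + s - c1 - d1) N / sf f δ (δ + s - c1) N)
        * (sf f δ (δ + s - c2 - d1) N / sf f δ (δ + s - c2) N)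
        * ∏ i, sf f δ (δ + s + x i) N * sf f δ (δ + s + x i - a i - d1) N
            / (sf f δ (δ + s + x i - a i) N * sf f δ (δ + s + x i - d1) N) := by
  have h0 : f 0 = 0 := by
    have := hodd 0
    rw [neg_zero] at this
    linear_combination this / 2
  have hcont : Continuous f := hdiff.continuous
  rw [Evw_eq_sum h0 δ a x s c1 c2 d1 d2 hd2]
  -- The curve `s + t`, `d₁ + 2t` respects the balancing condition, and on it every additional
  -- bracket has a nonconstant argument (coefficient of `t` equal to `1`, `2` or `-1`).
  have hgen : ∀ᶠ t in nhdsWithin (0 : ℂ) {0}ᶜ,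
      ∑ k ∈ Finset.Nat.antidiagonalTuple (m + 1) N,
        Eterm f δ a x (s + t) ![c1, c2] ![d1 + 2 * t, d2] (Fin.tail k) =
      (sf f δ (δ + (s + t) - c1 - (d1 + 2 * t)) N / sf f δ (δ + (s + t) - c1) N)
        * (sf f δ (δ + (s + t) - c2 - (d1 + 2 * t)) N / sf f δ (δ + (s + t) - c2) N)
        * ∏ i, sf f δ (δ + (s + t) + x i) N * sf f δ (δ + (s + t) + x i - a i - (d1 + 2 * t)) N
            / (sf f δ (δ + (s + t) + x i - a i) N * sf f δ (δ + (s + t) + x i - (d1 + 2 * t)) N) := by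
    have hev := eventually_bracket_ne_zero hf hdiff
    have g3 : ∀ᶠ t in nhdsWithin (0 : ℂ) {0}ᶜ, ∀ j, ∀ l ∈ Finset.range N,
        f (δ + s + x j - a j + (l : ℂ) * δ + 1 * t) ≠ 0 :=
      Filter.eventually_all.2 fun j => (Filter.eventually_all_finset _).2 fun l _ =>
        hev _ 1 one_ne_zero
    have gc1 : ∀ᶠ t in nhdsWithin (0 : ℂ) {0}ᶜ, ∀ l ∈ Finset.range N,
        f (δ + s - c1 + (l : ℂ) * δ + 1 * t) ≠ 0 :=
      (Filter.eventually_all_finset _).2 fun l _ => hev _ 1 one_ne_zero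
    have gc2 : ∀ᶠ t in nhdsWithin (0 : ℂ) {0}ᶜ, ∀ l ∈ Finset.range N,
        f (δ + s - c2 + (l : ℂ) * δ + 1 * t) ≠ 0 :=
      (Filter.eventually_all_finset _).2 fun l _ => hev _ 1 one_ne_zero
    have gG1 : ∀ᶠ t in nhdsWithin (0 : ℂ) {0}ᶜ, ∀ i, ∀ l ∈ Finset.range (2 * N + 1),
        f (x i + s + (l : ℂ) * δ + 1 * t) ≠ 0 :=
      Filter.eventually_all.2 fun j => (Filter.eventually_all_finset _).2 fun l _ =>
        hev _ 1 one_ne_zero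
    have gG2 : ∀ᶠ t in nhdsWithin (0 : ℂ) {0}ᶜ, ∀ l ∈ Finset.Icc (-(N + 1) : ℤ) (N + 1),
        f (d1 + (l : ℂ) * δ + 2 * t) ≠ 0 :=
      (Filter.eventually_all_finset _).2 fun l _ => hev _ 2 two_ne_zero
    have gG3 : ∀ᶠ t in nhdsWithin (0 : ℂ) {0}ᶜ, ∀ i, ∀ l ∈ Finset.range (2 * N + 1),
        f (δ + s - d1 + x i + (l : ℂ) * δ + (-1) * t) ≠ 0 :=
      Filter.eventually_all.2 fun j => (Filter.eventually_all_finset _).2 fun l _ =>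
        hev _ (-1) (neg_ne_zero.2 one_ne_zero)
    filter_upwards [g3, gc1, gc2, gG1, gG2, gG3] with t k3 kc1 kc2 k1 k2 k4
    refine generic_summation hf hodd hdiff hRiem δ hδ m N a x (s + t) c1 c2 (d1 + 2 * t) d2 hd2
      (by linear_combination hbal) hL1 ?_ hL4 ?_ ?_ ?_ ?_ ?_
    · intro j l hl
      convert k3 j l (Finset.mem_range.2 hl) using 2; ring
    · intro l hl
      convert kc1 l (Finset.mem_range.2 hl) using 2; ring
    · intro l hl
      convert kc2 l (Finset.mem_range.2 hl) using 2; ring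
    · intro i l hl
      convert k1 i l (Finset.mem_range.2 (by omega)) using 2; ring
    · intro l hl
      convert k2 l (Finset.mem_Icc.2 (abs_le.1 hl)) using 2; ring
    · intro i l hl
      convert k4 i l (Finset.mem_range.2 (by omega)) using 2; ring
  have s5 : ∀ M ≤ N, sf f δ (δ + s - c1) M ≠ 0 :=
    fun M hM => sf_ne_zero fun l hl => by simpa using hL5 0 l (by omega)
  have s5' : ∀ M ≤ N, sf f δ (δ + s - c2) M ≠ 0 :=
    fun M hM => sf_ne_zero fun l hl => by simpa using hL5 1 l (by omega)
  have s3 : ∀ M ≤ N, ∀ j, sf f δ (δ + s + x j - a j) M ≠ 0 :=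
    fun M hM j => sf_ne_zero fun l hl => hL3 j l (by omega)
  have s6 : ∀ M ≤ N, ∀ j, sf f δ (x j + δ + s - d1) M ≠ 0 :=
    fun M hM j => sf_ne_zero fun l hl => by simpa using hL6 j 0 l (by omega)
  have s6' : ∀ M ≤ N, ∀ j, sf f δ (x j + δ + s - d2) M ≠ 0 :=
    fun M hM j => sf_ne_zero fun l hl => by simpa using hL6 j 1 l (by omega)
  have hcL : ContinuousAt (fun t => ∑ k ∈ Finset.Nat.antidiagonalTuple (m + 1) N,
      Eterm f δ a x (s + t) ![c1, c2] ![d1 + 2 * t, d2] (Fin.tail k)) 0 := by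
    refine tendsto_finsetSum _ fun k hk => ?_
    rw [Finset.Nat.mem_antidiagonalTuple, Fin.sum_univ_succ] at hk
    have hle : ∑ i, Fin.tail k i ≤ N := by simp only [Fin.tail]; omega
    have hle' : ∀ i, Fin.tail k i ≤ N := fun i =>
      (Finset.single_le_sum (f := Fin.tail k) (fun _ _ => Nat.zero_le _) (Finset.mem_univ i)).trans hle
    refine continuousAt_Eterm hcont δ a x c1 c2 d2 (by fun_prop) (by fun_prop) _ ?_ ?_ ?_ ?_ ?_ ?_
    all_goals simp only [add_zero, mul_zero]
    · exact hL2
    · exact s3 _ hle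
    · exact s5 _ hle
    · exact s5' _ hle
    · exact fun i => s6 _ (hle' i) i
    · exact fun i => s6' _ (hle' i) i
  have hcR : ContinuousAt (fun t =>
      (sf f δ (δ + (s + t) - c1 - (d1 + 2 * t)) N / sf f δ (δ + (s + t) - c1) N)
        * (sf f δ (δ + (s + t) - c2 - (d1 + 2 * t)) N / sf f δ (δ + (s + t) - c2) N)
        * ∏ i, sf f δ (δ + (s + t) + x i) N * sf f δ (δ + (s + t) + x i - a i - (d1 + 2 * t)) N
            / (sf f δ (δ + (s + t) + x i - a i) N
              * sf f δ (δ + (s + t) + x i - (d1 + 2 * t)) N)) 0 := by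
    have hs : ∀ g : ℂ → ℂ, ContinuousAt g 0 → ContinuousAt (fun t => sf f δ (g t) N) 0 :=
      fun g hg => continuousAt_sf hcont δ hg N
    refine (((hs _ (by fun_prop)).div (hs _ (by fun_prop)) ?_).mul
      ((hs _ (by fun_prop)).div (hs _ (by fun_prop)) ?_)).mul (tendsto_finsetProd _ fun i _ =>
      ((hs _ (by fun_prop)).mul (hs _ (by fun_prop))).div
        ((hs _ (by fun_prop)).mul (hs _ (by fun_prop))) ?_)
    all_goals simp only [add_zero, mul_zero]
    · exact s5 N le_rfl
    · exact s5' N le_rfl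
    · refine mul_ne_zero (s3 N le_rfl i) ?_
      convert s6 N le_rfl i using 2; ring
  have hL := hcL.tendsto.mono_left (nhdsWithin_le_nhds (s := {0}ᶜ))
  have hR := hcR.tendsto.mono_left (nhdsWithin_le_nhds (s := {0}ᶜ))
  have := tendsto_nhds_unique (hL.congr' hgen) hR
  simpa only [add_zero, mul_zero] using this
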